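/- Fix constants 0 < L₀ < L, positive constants β₁, β₂, ρ₁, ρ₂, μ₁, μ₂, λ₁, λ₂, κ, γ, T > 0, and continuous forcing functions g₁, g₂ on [0,L₀]×[0,T] and g₃, g₄ on [L₀,L]×[0,T]. Let (φ, ω, u, v) be a classical solution of the transmission beam system on [0,T]. Then for every t ∈ [0,T] the energy equality holds: 𝓔(t) + κ ∫₀^t ∫₀^{L₀} φ_{xτ}² dx dτ + γ ∫₀^t ∫₀^{L₀} ω_τ² dx dτ = 𝓔(0) + ∫₀^t [ ∫₀^{L₀} (g₁ φ_τ + g₂ ω_τ) dx + ∫_{L₀}^{L} (g₃ u_τ + g₄ v_τ) dx ] dτ. -/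

import Mathlib

open MeasureTheory

/-- Partial derivative in the first (space) variable. -/
noncomputable def pdx (f : ℝ → ℝ → ℝ) : ℝ → ℝ → ℝ := fun x t => deriv (fun y => f y t) x

/-- Partial derivative in the second (time) variable. -/
noncomputable def pdt (f : ℝ → ℝ → ℝ) : ℝ → ℝ → ℝ := fun x t => deriv (fun s => f x s) t

/-!
Multiplying the transverse equation by `φ_t` and the axial equation by `ω_t` turns each beam into a
local conservation law `e_t + κ φ_tx² + γ ω_t² = g₁ φ_t + g₂ ω_t + F_x`, where the energy flux is
`F = (φ_x N - λ φ_xxx + μ φ_ttx + κ φ_tx) φ_t + λ φ_xx φ_tx + N ω_t` with `N = ω_x + φ_x² / 2`.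
Integrating in `x` leaves only the values of `F` at the end points of the beam: `F` vanishes at a
clamped and at a hinged end, and the transmission conditions say that it is continuous across the
interface. Integrating the sum of the two beams in `t` gives the energy equality.
-/

open Set Filter Topology Function

section PartialDerivatives

variable {f g : ℝ → ℝ → ℝ} {x y t : ℝ}

lemma hasDerivAt_slice_fst (hf : DifferentiableAt ℝ (uncurry f) (x, t)) :
    HasDerivAt (fun y => f y t) (fderiv ℝ (uncurry f) (x, t) (1, 0)) x :=
  hf.hasFDerivAt.comp_hasDerivAt (f := fun y => (y, t)) x
    ((hasDerivAt_id x).prodMk (hasDerivAt_const x t))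

lemma hasDerivAt_slice_snd (hf : DifferentiableAt ℝ (uncurry f) (x, t)) :
    HasDerivAt (fun s => f x s) (fderiv ℝ (uncurry f) (x, t) (0, 1)) t :=
  hf.hasFDerivAt.comp_hasDerivAt (f := fun s => (x, s)) t
    ((hasDerivAt_const t x).prodMk (hasDerivAt_id t))

lemma hasDerivAt_pdx (hf : DifferentiableAt ℝ (uncurry f) (x, t)) :
    HasDerivAt (fun y => f y t) (pdx f x t) x :=
  (hasDerivAt_slice_fst hf).differentiableAt.hasDerivAt

lemma hasDerivAt_pdt (hf : DifferentiableAt ℝ (uncurry f) (x, t)) :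
    HasDerivAt (fun s => f x s) (pdt f x t) t :=
  (hasDerivAt_slice_snd hf).differentiableAt.hasDerivAt

lemma hasDerivAt_pdx_of_contDiff (hf : ContDiff ℝ 1 (uncurry f)) (x t : ℝ) :
    HasDerivAt (fun y => f y t) (pdx f x t) x :=
  hasDerivAt_pdx (hf.differentiable one_ne_zero _)

lemma hasDerivAt_pdt_of_contDiff (hf : ContDiff ℝ 1 (uncurry f)) (x t : ℝ) :
    HasDerivAt (fun s => f x s) (pdt f x t) t :=
  hasDerivAt_pdt (hf.differentiable one_ne_zero _)

lemma uncurry_pdx (hf : Differentiable ℝ (uncurry f)) :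
    uncurry (pdx f) = fun p => fderiv ℝ (uncurry f) p (1, 0) :=
  funext fun p => (hasDerivAt_slice_fst (hf p)).deriv

lemma uncurry_pdt (hf : Differentiable ℝ (uncurry f)) :
    uncurry (pdt f) = fun p => fderiv ℝ (uncurry f) p (0, 1) :=
  funext fun p => (hasDerivAt_slice_snd (hf p)).deriv

lemma contDiff_pdx {m n : WithTop ℕ∞} (hf : ContDiff ℝ n (uncurry f))
    (hmn : m + 1 ≤ n := by norm_num) : ContDiff ℝ m (uncurry (pdx f)) := by
  rw [uncurry_pdx (hf.differentiable (by rintro rfl; simp at hmn))]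
  exact (hf.fderiv_right hmn).clm_apply contDiff_const

lemma contDiff_pdt {m n : WithTop ℕ∞} (hf : ContDiff ℝ n (uncurry f))
    (hmn : m + 1 ≤ n := by norm_num) : ContDiff ℝ m (uncurry (pdt f)) := by
  rw [uncurry_pdt (hf.differentiable (by rintro rfl; simp at hmn))]
  exact (hf.fderiv_right hmn).clm_apply contDiff_const

lemma pdt_pdx_comm (hf : ContDiff ℝ 2 (uncurry f)) : pdt (pdx f) = pdx (pdt f) := by
  funext x t
  have hf₁ : Differentiable ℝ (uncurry f) := hf.differentiable two_ne_zero
  have hf₂ : DifferentiableAt ℝ (fderiv ℝ (uncurry f)) (x, t) :=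
    (hf.fderiv_right (m := 1) (by norm_num)).differentiable one_ne_zero _
  have hx : DifferentiableAt ℝ (uncurry (pdx f)) (x, t) :=
    (contDiff_pdx (m := 1) hf).differentiable one_ne_zero _
  have ht : DifferentiableAt ℝ (uncurry (pdt f)) (x, t) :=
    (contDiff_pdt (m := 1) hf).differentiable one_ne_zero _
  have hsymm : IsSymmSndFDerivAt ℝ (uncurry f) (x, t) :=
    hf.contDiffAt.isSymmSndFDerivAt (by simp)
  calc pdt (pdx f) x t = fderiv ℝ (fderiv ℝ (uncurry f)) (x, t) (0, 1) (1, 0) := by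
        rw [(hasDerivAt_pdt hx).unique (hasDerivAt_slice_snd hx), uncurry_pdx hf₁,
          fderiv_clm_apply hf₂ (differentiableAt_const _)]
        simp
    _ = fderiv ℝ (fderiv ℝ (uncurry f)) (x, t) (1, 0) (0, 1) := hsymm _ _
    _ = pdx (pdt f) x t := by
        rw [(hasDerivAt_pdx ht).unique (hasDerivAt_slice_fst ht), uncurry_pdt hf₁,
          fderiv_clm_apply hf₂ (differentiableAt_const _)]
        simp

lemma pdt_congr (h : ∀ᶠ s in 𝓝 t, f x s = g y s) : pdt f x t = pdt g y t :=
  EventuallyEq.deriv_eq h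

lemma pdt_eq_zero (h : ∀ᶠ s in 𝓝 t, f x s = 0) : pdt f x t = 0 :=
  (EventuallyEq.deriv_eq h).trans (deriv_const t 0)

lemma continuous_sq_pdx_pdt (hf : ContDiff ℝ 2 (uncurry f)) :
    Continuous (uncurry fun x t => pdx (pdt f) x t ^ 2) :=
  (contDiff_pdx (m := 0) (n := 1) (contDiff_pdt hf)).continuous.pow 2

lemma continuous_sq_pdt (hf : ContDiff ℝ 1 (uncurry f)) :
    Continuous (uncurry fun x t => pdt f x t ^ 2) :=
  (contDiff_pdt (m := 0) hf).continuous.pow 2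

end PartialDerivatives

section Slices

variable {f : ℝ → ℝ → ℝ}

lemma intervalIntegrable_slice_fst (hf : Continuous (uncurry f)) (a b t : ℝ) :
    IntervalIntegrable (fun x => f x t) volume a b :=
  (hf.comp (Continuous.prodMk_left t)).intervalIntegrable a b

lemma continuous_integral_fst (hf : Continuous (uncurry f)) (a b : ℝ) :
    Continuous fun t => ∫ x in a..b, f x t :=
  intervalIntegral.continuous_parametric_intervalIntegral_of_continuous'
    (f := fun t x => f x t) (hf.comp continuous_swap) a b

lemma integral_pdx (hf : ContDiff ℝ 1 (uncurry f)) (a b t : ℝ) :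
    ∫ x in a..b, pdx f x t = f b t - f a t :=
  intervalIntegral.integral_eq_sub_of_hasDerivAt
    (fun y _ => hasDerivAt_pdx_of_contDiff hf y t)
    (intervalIntegrable_slice_fst (contDiff_pdx (m := 0) hf).continuous a b t)

lemma integral_pdt (hf : ContDiff ℝ 1 (uncurry f)) (x s t : ℝ) :
    ∫ τ in s..t, pdt f x τ = f x t - f x s :=
  intervalIntegral.integral_eq_sub_of_hasDerivAt
    (fun τ _ => hasDerivAt_pdt_of_contDiff hf x τ)
    (((contDiff_pdt (m := 0) hf).continuous.comp
      (Continuous.prodMk_right x)).intervalIntegrable s t)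

lemma integral_integral_pdt (hf : ContDiff ℝ 1 (uncurry f)) (a b s t : ℝ) :
    ∫ τ in s..t, ∫ x in a..b, pdt f x τ = (∫ x in a..b, f x t) - ∫ x in a..b, f x s := by
  have hint : IntegrableOn (uncurry (pdt f)) (uIoc a b ×ˢ uIoc s t) :=
    ((contDiff_pdt (m := 0) hf).continuous.continuousOn.integrableOn_compact
      (isCompact_uIcc.prod isCompact_uIcc)).mono_set
      (prod_mono uIoc_subset_uIcc uIoc_subset_uIcc)
  rw [← intervalIntegral_intervalIntegral_swap hint, ← intervalIntegral.integral_sub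
    (intervalIntegrable_slice_fst hf.continuous a b t)
    (intervalIntegrable_slice_fst hf.continuous a b s)]
  simp only [integral_pdt hf]

end Slices

/-- The material constants of a full von Kármán beam: transverse and axial mass densities `β`, `ρ`,
rotational inertia `μ`, bending stiffness `lam`, and the damping coefficients `κ` (of the rotation
velocity `φ_tx`) and `γ` (of the axial velocity `ω_t`). No sign is imposed; an undamped beam has
`κ = γ = 0`. -/
structure VonKarmanBeam where
  β : ℝ
  ρ : ℝ
  μ : ℝ
  lam : ℝ
  κ : ℝ
  γ : ℝ

/-- The nonlinear axial strain `ω_x + φ_x² / 2` of a beam with transverse displacement `φ` and axial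
displacement `ω`. -/
noncomputable def axialStrain (φ ω : ℝ → ℝ → ℝ) (x t : ℝ) : ℝ :=
  pdx ω x t + pdx φ x t ^ 2 / 2

/-- The transverse component `φ_x (ω_x + φ_x² / 2)` of the axial tension. -/
noncomputable def transverseTension (φ ω : ℝ → ℝ → ℝ) (x t : ℝ) : ℝ :=
  pdx φ x t * axialStrain φ ω x t

/-- The beam is clamped at the point `x` at time `t`. -/
structure IsClampedAt (φ ω : ℝ → ℝ → ℝ) (x t : ℝ) : Prop where
  transverse : φ x t = 0
  slope : pdx φ x t = 0
  axial : ω x t = 0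

/-- The beam is hinged (supported, with vanishing bending moment) at the point `x` at time `t`. -/
structure IsHingedAt (φ ω : ℝ → ℝ → ℝ) (x t : ℝ) : Prop where
  transverse : φ x t = 0
  curvature : pdx (pdx φ) x t = 0
  axial : ω x t = 0

section AxialStrain

variable {φ ω : ℝ → ℝ → ℝ}

lemma contDiff_axialStrain (hφ : ContDiff ℝ 2 (uncurry φ)) (hω : ContDiff ℝ 2 (uncurry ω)) :
    ContDiff ℝ 1 (uncurry (axialStrain φ ω)) :=
  (contDiff_pdx hω).add (((contDiff_pdx hφ).pow 2).div_const 2)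

lemma contDiff_transverseTension (hφ : ContDiff ℝ 2 (uncurry φ)) (hω : ContDiff ℝ 2 (uncurry ω)) :
    ContDiff ℝ 1 (uncurry (transverseTension φ ω)) :=
  (contDiff_pdx hφ).mul (contDiff_axialStrain hφ hω)

lemma pdt_axialStrain (hφ : ContDiff ℝ 2 (uncurry φ)) (hω : ContDiff ℝ 2 (uncurry ω)) (x t : ℝ) :
    pdt (axialStrain φ ω) x t = pdx (pdt ω) x t + pdx φ x t * pdx (pdt φ) x t := by
  have hφ_x := hasDerivAt_pdt_of_contDiff (contDiff_pdx hφ) x t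
  have hω_x := hasDerivAt_pdt_of_contDiff (contDiff_pdx hω) x t
  rw [pdt_pdx_comm hφ] at hφ_x
  rw [pdt_pdx_comm hω] at hω_x
  refine (hω_x.add ((hφ_x.pow 2).div_const 2)).deriv.trans ?_
  push_cast
  ring

end AxialStrain

namespace VonKarmanBeam

/-- The linear shear force `λ φ_xxx - μ φ_ttx - κ φ_tx`. -/
noncomputable def shearForce (B : VonKarmanBeam) (φ : ℝ → ℝ → ℝ) (x t : ℝ) : ℝ :=
  B.lam * pdx (pdx (pdx φ)) x t - B.μ * pdx (pdt (pdt φ)) x t - B.κ * pdx (pdt φ) x t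

/-- The energy per unit length. -/
noncomputable def energyDensity (B : VonKarmanBeam) (φ ω : ℝ → ℝ → ℝ) (x t : ℝ) : ℝ :=
  (1 / 2) * (B.β * pdt φ x t ^ 2 + B.ρ * pdt ω x t ^ 2 + B.μ * pdx (pdt φ) x t ^ 2
    + B.lam * pdx (pdx φ) x t ^ 2 + axialStrain φ ω x t ^ 2)

/-- The rate at which energy crosses the point `x` at time `t`, counted positively when it flows in
the direction of decreasing `x`. -/
noncomputable def energyFlux (B : VonKarmanBeam) (φ ω : ℝ → ℝ → ℝ) (x t : ℝ) : ℝ :=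
  (transverseTension φ ω x t - B.shearForce φ x t) * pdt φ x t
    + B.lam * pdx (pdx φ) x t * pdx (pdt φ) x t + axialStrain φ ω x t * pdt ω x t

/-- The energy stored in the part `[a, b]` of the beam. -/
noncomputable def energy (B : VonKarmanBeam) (a b : ℝ) (φ ω : ℝ → ℝ → ℝ) (t : ℝ) : ℝ :=
  ∫ x in a..b, B.energyDensity φ ω x t

/-- The time derivative of `energy`, with the derivative taken under the integral sign. -/
noncomputable def energyRate (B : VonKarmanBeam) (a b : ℝ) (φ ω : ℝ → ℝ → ℝ) (t : ℝ) : ℝ :=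
  ∫ x in a..b, pdt (B.energyDensity φ ω) x t

/-- The rate at which damping dissipates energy in the part `[a, b]` of the beam. -/
noncomputable def dissipationRate (B : VonKarmanBeam) (a b : ℝ) (φ ω : ℝ → ℝ → ℝ) (t : ℝ) : ℝ :=
  B.κ * (∫ x in a..b, pdx (pdt φ) x t ^ 2) + B.γ * ∫ x in a..b, pdt ω x t ^ 2

/-- A classical solution on `[a, b] × [0, T]` of the beam equations with transverse load `g₁` and
axial load `g₂`. The displacements are defined on the whole plane, so that no one-sided derivatives
are needed at the boundary; the equations are imposed in the interior only. -/
structure IsClassicalSolution (B : VonKarmanBeam) (a b T : ℝ) (g₁ g₂ φ ω : ℝ → ℝ → ℝ) : Prop where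
  contDiff_transverse : ContDiff ℝ 4 (uncurry φ)
  contDiff_axial : ContDiff ℝ 2 (uncurry ω)
  transverse_eq : ∀ x ∈ Ioo a b, ∀ t ∈ Ioo 0 T,
    B.β * pdt (pdt φ) x t - B.μ * pdx (pdx (pdt (pdt φ))) x t - B.κ * pdx (pdx (pdt φ)) x t
      + B.lam * pdx (pdx (pdx (pdx φ))) x t - pdx (transverseTension φ ω) x t = g₁ x t
  axial_eq : ∀ x ∈ Ioo a b, ∀ t ∈ Ioo 0 T,
    B.ρ * pdt (pdt ω) x t + B.γ * pdt ω x t - pdx (axialStrain φ ω) x t = g₂ x t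

/-- The transmission conditions between a beam `B₁` with displacements `φ`, `ω` and a beam `B₂` with
displacements `u`, `v` that meet at the point `x`, at time `t`. -/
structure TransmitsAt (B₁ B₂ : VonKarmanBeam) (φ ω u v : ℝ → ℝ → ℝ) (x t : ℝ) : Prop where
  transverse : φ x t = u x t
  axial : ω x t = v x t
  slope : pdx φ x t = pdx u x t
  moment : B₁.lam * pdx (pdx φ) x t = B₂.lam * pdx (pdx u) x t
  stretch : pdx ω x t = pdx v x t
  shear : B₁.shearForce φ x t = B₂.shearForce u x t

section Regularity

variable {φ ω : ℝ → ℝ → ℝ} (B : VonKarmanBeam)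

lemma contDiff_shearForce (hφ : ContDiff ℝ 4 (uncurry φ)) :
    ContDiff ℝ 1 (uncurry (B.shearForce φ)) := by
  have hφ_xxx : ContDiff ℝ 1 (uncurry (pdx (pdx (pdx φ)))) :=
    contDiff_pdx (n := 2) (contDiff_pdx (n := 3) (contDiff_pdx hφ))
  have hφ_ttx : ContDiff ℝ 1 (uncurry (pdx (pdt (pdt φ)))) :=
    contDiff_pdx (n := 2) (contDiff_pdt (n := 3) (contDiff_pdt hφ))
  have hφ_tx : ContDiff ℝ 1 (uncurry (pdx (pdt φ))) := contDiff_pdx (n := 3) (contDiff_pdt hφ)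
  exact ((contDiff_const.mul hφ_xxx).sub (contDiff_const.mul hφ_ttx)).sub
    (contDiff_const.mul hφ_tx)

lemma contDiff_energyDensity (hφ : ContDiff ℝ 3 (uncurry φ)) (hω : ContDiff ℝ 2 (uncurry ω)) :
    ContDiff ℝ 1 (uncurry (B.energyDensity φ ω)) := by
  have hφ_t : ContDiff ℝ 1 (uncurry (pdt φ)) := contDiff_pdt hφ
  have hω_t : ContDiff ℝ 1 (uncurry (pdt ω)) := contDiff_pdt hω
  have hφ_tx : ContDiff ℝ 1 (uncurry (pdx (pdt φ))) := contDiff_pdx (n := 2) (contDiff_pdt hφ)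
  have hφ_xx : ContDiff ℝ 1 (uncurry (pdx (pdx φ))) := contDiff_pdx (n := 2) (contDiff_pdx hφ)
  have hstrain := contDiff_axialStrain (hφ.of_le (by norm_num)) hω
  exact contDiff_const.mul (((((contDiff_const.mul (hφ_t.pow 2)).add
    (contDiff_const.mul (hω_t.pow 2))).add (contDiff_const.mul (hφ_tx.pow 2))).add
    (contDiff_const.mul (hφ_xx.pow 2))).add (hstrain.pow 2))

lemma contDiff_energyFlux (hφ : ContDiff ℝ 4 (uncurry φ)) (hω : ContDiff ℝ 2 (uncurry ω)) :
    ContDiff ℝ 1 (uncurry (B.energyFlux φ ω)) := by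
  have hφ₂ : ContDiff ℝ 2 (uncurry φ) := hφ.of_le (by norm_num)
  have hφ_t : ContDiff ℝ 1 (uncurry (pdt φ)) := contDiff_pdt hφ
  have hω_t : ContDiff ℝ 1 (uncurry (pdt ω)) := contDiff_pdt hω
  have hφ_tx : ContDiff ℝ 1 (uncurry (pdx (pdt φ))) := contDiff_pdx (n := 3) (contDiff_pdt hφ)
  have hφ_xx : ContDiff ℝ 1 (uncurry (pdx (pdx φ))) := contDiff_pdx (n := 3) (contDiff_pdx hφ)
  exact ((((contDiff_transverseTension hφ₂ hω).sub (B.contDiff_shearForce hφ)).mul hφ_t).add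
    ((contDiff_const.mul hφ_xx).mul hφ_tx)).add ((contDiff_axialStrain hφ₂ hω).mul hω_t)

end Regularity

section LocalConservationLaw

variable {φ ω : ℝ → ℝ → ℝ} (B : VonKarmanBeam)

lemma pdt_energyDensity (hφ : ContDiff ℝ 3 (uncurry φ)) (hω : ContDiff ℝ 2 (uncurry ω))
    (x t : ℝ) :
    pdt (B.energyDensity φ ω) x t
      = B.β * pdt φ x t * pdt (pdt φ) x t + B.ρ * pdt ω x t * pdt (pdt ω) x t
        + B.μ * pdx (pdt φ) x t * pdx (pdt (pdt φ)) x t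
        + B.lam * pdx (pdx φ) x t * pdx (pdx (pdt φ)) x t
        + axialStrain φ ω x t * (pdx (pdt ω) x t + pdx φ x t * pdx (pdt φ) x t) := by
  have hφ₂ : ContDiff ℝ 2 (uncurry φ) := hφ.of_le (by norm_num)
  have hφ_t := hasDerivAt_pdt_of_contDiff (contDiff_pdt hφ) x t
  have hω_t := hasDerivAt_pdt_of_contDiff (contDiff_pdt hω) x t
  have hφ_tx := hasDerivAt_pdt_of_contDiff (contDiff_pdx (n := 2) (contDiff_pdt hφ)) x t
  have hφ_xx := hasDerivAt_pdt_of_contDiff (contDiff_pdx (n := 2) (contDiff_pdx hφ)) x t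
  have hstrain := hasDerivAt_pdt_of_contDiff (contDiff_axialStrain hφ₂ hω) x t
  rw [pdt_pdx_comm (contDiff_pdt hφ)] at hφ_tx
  rw [pdt_pdx_comm (contDiff_pdx hφ), pdt_pdx_comm hφ₂] at hφ_xx
  rw [pdt_axialStrain hφ₂ hω] at hstrain
  refine ((((((hφ_t.pow 2).const_mul B.β).add ((hω_t.pow 2).const_mul B.ρ)).add
    ((hφ_tx.pow 2).const_mul B.μ)).add ((hφ_xx.pow 2).const_mul B.lam)).add
    (hstrain.pow 2)).const_mul (1 / 2) |>.deriv.trans ?_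
  push_cast
  ring

lemma pdx_shearForce (hφ : ContDiff ℝ 4 (uncurry φ)) (x t : ℝ) :
    pdx (B.shearForce φ) x t
      = B.lam * pdx (pdx (pdx (pdx φ))) x t - B.μ * pdx (pdx (pdt (pdt φ))) x t
        - B.κ * pdx (pdx (pdt φ)) x t := by
  have hφ_xxx := hasDerivAt_pdx_of_contDiff
    (contDiff_pdx (n := 2) (contDiff_pdx (n := 3) (contDiff_pdx hφ))) x t
  have hφ_ttx := hasDerivAt_pdx_of_contDiff
    (contDiff_pdx (n := 2) (contDiff_pdt (n := 3) (contDiff_pdt hφ))) x t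
  have hφ_tx := hasDerivAt_pdx_of_contDiff (contDiff_pdx (n := 3) (contDiff_pdt hφ)) x t
  exact (((hφ_xxx.const_mul B.lam).sub (hφ_ttx.const_mul B.μ)).sub
    (hφ_tx.const_mul B.κ)).deriv

lemma pdx_energyFlux (hφ : ContDiff ℝ 4 (uncurry φ)) (hω : ContDiff ℝ 2 (uncurry ω)) (x t : ℝ) :
    pdx (B.energyFlux φ ω) x t
      = (pdx (transverseTension φ ω) x t - pdx (B.shearForce φ) x t) * pdt φ x t
        + (transverseTension φ ω x t - B.shearForce φ x t) * pdx (pdt φ) x t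
        + B.lam * pdx (pdx (pdx φ)) x t * pdx (pdt φ) x t
        + B.lam * pdx (pdx φ) x t * pdx (pdx (pdt φ)) x t
        + pdx (axialStrain φ ω) x t * pdt ω x t + axialStrain φ ω x t * pdx (pdt ω) x t := by
  have hφ₂ : ContDiff ℝ 2 (uncurry φ) := hφ.of_le (by norm_num)
  have hφ_t := hasDerivAt_pdx_of_contDiff (contDiff_pdt hφ) x t
  have hω_t := hasDerivAt_pdx_of_contDiff (contDiff_pdt hω) x t
  have hφ_xx := hasDerivAt_pdx_of_contDiff (contDiff_pdx (n := 3) (contDiff_pdx hφ)) x t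
  have hφ_tx := hasDerivAt_pdx_of_contDiff (contDiff_pdx (n := 3) (contDiff_pdt hφ)) x t
  have htension := hasDerivAt_pdx_of_contDiff (contDiff_transverseTension hφ₂ hω) x t
  have hshear := hasDerivAt_pdx_of_contDiff (B.contDiff_shearForce hφ) x t
  have hstrain := hasDerivAt_pdx_of_contDiff (contDiff_axialStrain hφ₂ hω) x t
  refine ((((htension.sub hshear).mul hφ_t).add ((hφ_xx.const_mul B.lam).mul hφ_tx)).add
    (hstrain.mul hω_t)).deriv.trans ?_
  simp only [Pi.sub_apply]
  ring

variable {B} {a b T : ℝ} {g₁ g₂ : ℝ → ℝ → ℝ}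

lemma IsClassicalSolution.pdt_energyDensity_add_dissipation
    (h : B.IsClassicalSolution a b T g₁ g₂ φ ω) {x t : ℝ} (hx : x ∈ Ioo a b) (ht : t ∈ Ioo 0 T) :
    pdt (B.energyDensity φ ω) x t + B.κ * pdx (pdt φ) x t ^ 2 + B.γ * pdt ω x t ^ 2
      = g₁ x t * pdt φ x t + g₂ x t * pdt ω x t + pdx (B.energyFlux φ ω) x t := by
  rw [B.pdt_energyDensity (h.contDiff_transverse.of_le (by norm_num)) h.contDiff_axial,
    B.pdx_energyFlux h.contDiff_transverse h.contDiff_axial,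
    B.pdx_shearForce h.contDiff_transverse, ← h.transverse_eq x hx t ht, ← h.axial_eq x hx t ht,
    shearForce, transverseTension]
  ring

end LocalConservationLaw

section EndPoints

variable {B B₁ B₂ : VonKarmanBeam} {φ ω u v : ℝ → ℝ → ℝ} {x t : ℝ}

lemma energyFlux_eq_zero_of_isClampedAt (hφ : ContDiff ℝ 2 (uncurry φ))
    (h : ∀ᶠ s in 𝓝 t, IsClampedAt φ ω x s) : B.energyFlux φ ω x t = 0 := by
  have hφ_t : pdt φ x t = 0 := pdt_eq_zero (h.mono fun _ hs => hs.transverse)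
  have hω_t : pdt ω x t = 0 := pdt_eq_zero (h.mono fun _ hs => hs.axial)
  have hφ_tx : pdx (pdt φ) x t = 0 := by
    rw [← pdt_pdx_comm hφ]
    exact pdt_eq_zero (h.mono fun _ hs => hs.slope)
  simp [energyFlux, hφ_t, hω_t, hφ_tx]

lemma energyFlux_eq_zero_of_isHingedAt (h : ∀ᶠ s in 𝓝 t, IsHingedAt φ ω x s) :
    B.energyFlux φ ω x t = 0 := by
  have hφ_t : pdt φ x t = 0 := pdt_eq_zero (h.mono fun _ hs => hs.transverse)
  have hω_t : pdt ω x t = 0 := pdt_eq_zero (h.mono fun _ hs => hs.axial)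
  simp [energyFlux, hφ_t, hω_t, h.self_of_nhds.curvature]

lemma energyFlux_eq_of_transmitsAt (hφ : ContDiff ℝ 2 (uncurry φ)) (hu : ContDiff ℝ 2 (uncurry u))
    (h : ∀ᶠ s in 𝓝 t, B₁.TransmitsAt B₂ φ ω u v x s) :
    B₁.energyFlux φ ω x t = B₂.energyFlux u v x t := by
  have ht := h.self_of_nhds
  have hφu_t : pdt φ x t = pdt u x t := pdt_congr (h.mono fun _ hs => hs.transverse)
  have hωv_t : pdt ω x t = pdt v x t := pdt_congr (h.mono fun _ hs => hs.axial)
  have hφu_tx : pdx (pdt φ) x t = pdx (pdt u) x t := by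
    rw [← pdt_pdx_comm hφ, ← pdt_pdx_comm hu]
    exact pdt_congr (h.mono fun _ hs => hs.slope)
  simp only [energyFlux, transverseTension, axialStrain, hφu_t, hωv_t, hφu_tx, ht.slope,
    ht.moment, ht.stretch, ht.shear]

end EndPoints

section EnergyBalance

variable {B : VonKarmanBeam} {φ ω : ℝ → ℝ → ℝ}

lemma continuous_energyRate (hφ : ContDiff ℝ 3 (uncurry φ)) (hω : ContDiff ℝ 2 (uncurry ω))
    (a b : ℝ) : Continuous (B.energyRate a b φ ω) :=
  continuous_integral_fst (contDiff_pdt (m := 0) (B.contDiff_energyDensity hφ hω)).continuous a b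

lemma integral_energyRate (hφ : ContDiff ℝ 3 (uncurry φ)) (hω : ContDiff ℝ 2 (uncurry ω))
    (a b s t : ℝ) :
    ∫ τ in s..t, B.energyRate a b φ ω τ = B.energy a b φ ω t - B.energy a b φ ω s :=
  integral_integral_pdt (B.contDiff_energyDensity hφ hω) a b s t

lemma continuous_dissipationRate (hφ : ContDiff ℝ 2 (uncurry φ)) (hω : ContDiff ℝ 1 (uncurry ω))
    (a b : ℝ) : Continuous (B.dissipationRate a b φ ω) :=
  (continuous_const.mul (continuous_integral_fst (continuous_sq_pdx_pdt hφ) a b)).add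
    (continuous_const.mul (continuous_integral_fst (continuous_sq_pdt hω) a b))

lemma integral_dissipationRate (B : VonKarmanBeam) (hφ : ContDiff ℝ 2 (uncurry φ))
    (hω : ContDiff ℝ 1 (uncurry ω)) (a b s t : ℝ) :
    ∫ τ in s..t, B.dissipationRate a b φ ω τ
      = B.κ * (∫ τ in s..t, ∫ x in a..b, pdx (pdt φ) x τ ^ 2)
        + B.γ * ∫ τ in s..t, ∫ x in a..b, pdt ω x τ ^ 2 := by
  have hκ : IntervalIntegrable (fun τ => ∫ x in a..b, pdx (pdt φ) x τ ^ 2) volume s t :=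
    (continuous_integral_fst (continuous_sq_pdx_pdt hφ) a b).intervalIntegrable s t
  have hγ : IntervalIntegrable (fun τ => ∫ x in a..b, pdt ω x τ ^ 2) volume s t :=
    (continuous_integral_fst (continuous_sq_pdt hω) a b).intervalIntegrable s t
  simp only [dissipationRate]
  rw [intervalIntegral.integral_add (hκ.const_mul B.κ) (hγ.const_mul B.γ),
    intervalIntegral.integral_const_mul, intervalIntegral.integral_const_mul]

variable {a b T : ℝ} {g₁ g₂ : ℝ → ℝ → ℝ}

lemma IsClassicalSolution.energyRate_add_dissipationRate
    (h : B.IsClassicalSolution a b T g₁ g₂ φ ω) (hab : a ≤ b) {t : ℝ} (ht : t ∈ Ioo 0 T) :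
    B.energyRate a b φ ω t + B.dissipationRate a b φ ω t
      = (∫ x in a..b, (g₁ x t * pdt φ x t + g₂ x t * pdt ω x t))
        + (B.energyFlux φ ω b t - B.energyFlux φ ω a t) := by
  have hφ := h.contDiff_transverse
  have hω := h.contDiff_axial
  have hrate := intervalIntegrable_slice_fst (contDiff_pdt (m := 0)
    (B.contDiff_energyDensity (hφ.of_le (by norm_num)) hω)).continuous a b t
  have hκ := (intervalIntegrable_slice_fst
    (continuous_sq_pdx_pdt (hφ.of_le (by norm_num))) a b t).const_mul B.κ
  have hγ := (intervalIntegrable_slice_fst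
    (continuous_sq_pdt (hω.of_le (by norm_num))) a b t).const_mul B.γ
  have hflux := B.contDiff_energyFlux hφ hω
  have hflux_x := intervalIntegrable_slice_fst (contDiff_pdx (m := 0) hflux).continuous a b t
  have hpower : ∫ x in a..b, (g₁ x t * pdt φ x t + g₂ x t * pdt ω x t)
      = ∫ x in a..b, (pdt (B.energyDensity φ ω) x t
          + (B.κ * pdx (pdt φ) x t ^ 2 + B.γ * pdt ω x t ^ 2) - pdx (B.energyFlux φ ω) x t) :=
    intervalIntegral.integral_congr_Ioo_of_le hab fun x hx => by
      linear_combination -h.pdt_energyDensity_add_dissipation hx ht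
  rw [hpower, intervalIntegral.integral_sub (hrate.add (hκ.add hγ)) hflux_x,
    intervalIntegral.integral_add hrate (hκ.add hγ), intervalIntegral.integral_add hκ hγ,
    intervalIntegral.integral_const_mul, intervalIntegral.integral_const_mul,
    integral_pdx hflux, energyRate, dissipationRate]
  ring

end EnergyBalance

section Transmission

variable {B₁ B₂ : VonKarmanBeam} {a b c T : ℝ} {g₁ g₂ g₃ g₄ φ ω u v : ℝ → ℝ → ℝ}

lemma energyRate_add_dissipationRate_of_transmits (hac : a ≤ c) (hcb : c ≤ b)
    (h₁ : B₁.IsClassicalSolution a c T g₁ g₂ φ ω) (h₂ : B₂.IsClassicalSolution c b T g₃ g₄ u v)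
    (hclamped : ∀ t ∈ Ioo 0 T, IsClampedAt φ ω a t)
    (hhinged : ∀ t ∈ Ioo 0 T, IsHingedAt u v b t)
    (htransmits : ∀ t ∈ Ioo 0 T, B₁.TransmitsAt B₂ φ ω u v c t) {t : ℝ} (ht : t ∈ Ioo 0 T) :
    (B₁.energyRate a c φ ω t + B₁.dissipationRate a c φ ω t)
        + (B₂.energyRate c b u v t + B₂.dissipationRate c b u v t)
      = (∫ x in a..c, (g₁ x t * pdt φ x t + g₂ x t * pdt ω x t))
        + ∫ x in c..b, (g₃ x t * pdt u x t + g₄ x t * pdt v x t) := by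
  have hφ : ContDiff ℝ 2 (uncurry φ) := h₁.contDiff_transverse.of_le (by norm_num)
  have hu : ContDiff ℝ 2 (uncurry u) := h₂.contDiff_transverse.of_le (by norm_num)
  have hnear : ∀ᶠ s in 𝓝 t, s ∈ Ioo 0 T := isOpen_Ioo.mem_nhds ht
  rw [h₁.energyRate_add_dissipationRate hac ht, h₂.energyRate_add_dissipationRate hcb ht,
    energyFlux_eq_zero_of_isClampedAt hφ (hnear.mono hclamped),
    energyFlux_eq_zero_of_isHingedAt (hnear.mono hhinged),
    energyFlux_eq_of_transmitsAt hφ hu (hnear.mono htransmits)]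
  ring

end Transmission

end VonKarmanBeam

open VonKarmanBeam in
theorem stmt_4_general {B₁ B₂ : VonKarmanBeam} {a b c T : ℝ} {g₁ g₂ g₃ g₄ φ ω u v : ℝ → ℝ → ℝ}
    (hac : a ≤ c) (hcb : c ≤ b)
    (h₁ : B₁.IsClassicalSolution a c T g₁ g₂ φ ω) (h₂ : B₂.IsClassicalSolution c b T g₃ g₄ u v)
    (hclamped : ∀ t ∈ Ioo 0 T, IsClampedAt φ ω a t)
    (hhinged : ∀ t ∈ Ioo 0 T, IsHingedAt u v b t)
    (htransmits : ∀ t ∈ Ioo 0 T, B₁.TransmitsAt B₂ φ ω u v c t) {t : ℝ} (ht : t ∈ Icc 0 T) :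
    (B₁.energy a c φ ω t + B₂.energy c b u v t)
        + (∫ τ in 0..t, B₁.dissipationRate a c φ ω τ) + (∫ τ in 0..t, B₂.dissipationRate c b u v τ)
      = (B₁.energy a c φ ω 0 + B₂.energy c b u v 0)
        + ∫ τ in 0..t, ((∫ x in a..c, (g₁ x τ * pdt φ x τ + g₂ x τ * pdt ω x τ))
          + ∫ x in c..b, (g₃ x τ * pdt u x τ + g₄ x τ * pdt v x τ)) := by
  have hφ : ContDiff ℝ 3 (uncurry φ) := h₁.contDiff_transverse.of_le (by norm_num)
  have hu : ContDiff ℝ 3 (uncurry u) := h₂.contDiff_transverse.of_le (by norm_num)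
  have hω := h₁.contDiff_axial
  have hv := h₂.contDiff_axial
  have hrate₁ : IntervalIntegrable (B₁.energyRate a c φ ω) volume 0 t :=
    (continuous_energyRate hφ hω a c).intervalIntegrable 0 t
  have hrate₂ : IntervalIntegrable (B₂.energyRate c b u v) volume 0 t :=
    (continuous_energyRate hu hv c b).intervalIntegrable 0 t
  have hdiss₁ : IntervalIntegrable (B₁.dissipationRate a c φ ω) volume 0 t :=
    (continuous_dissipationRate (hφ.of_le (by norm_num)) (hω.of_le (by norm_num))
      a c).intervalIntegrable 0 t
  have hdiss₂ : IntervalIntegrable (B₂.dissipationRate c b u v) volume 0 t :=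
    (continuous_dissipationRate (hu.of_le (by norm_num)) (hv.of_le (by norm_num))
      c b).intervalIntegrable 0 t
  rw [← intervalIntegral.integral_congr_Ioo_of_le ht.1 fun τ hτ =>
      energyRate_add_dissipationRate_of_transmits hac hcb h₁ h₂ hclamped hhinged htransmits
        (Ioo_subset_Ioo_right ht.2 hτ),
    intervalIntegral.integral_add (hrate₁.add hdiss₁) (hrate₂.add hdiss₂),
    intervalIntegral.integral_add hrate₁ hdiss₁, intervalIntegral.integral_add hrate₂ hdiss₂,
    integral_energyRate hφ hω, integral_energyRate hu hv]
  ring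

/-- Energy equality for classical solutions of the nonlinear transmission problem for
the full von Karman beam (Theorem 3 (iii) of the paper). -/
theorem stmt_4 (L₀ L T β₁ β₂ ρ₁ ρ₂ μ₁ μ₂ lam₁ lam₂ κ γ : ℝ)
    (hL₀ : 0 < L₀) (hL : L₀ < L) (hT : 0 < T)
    (hβ₁ : 0 < β₁) (hβ₂ : 0 < β₂) (hρ₁ : 0 < ρ₁) (hρ₂ : 0 < ρ₂)
    (hμ₁ : 0 < μ₁) (hμ₂ : 0 < μ₂) (hlam₁ : 0 < lam₁) (hlam₂ : 0 < lam₂)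
    (hκ : 0 < κ) (hγ : 0 < γ)
    (g₁ g₂ g₃ g₄ : ℝ → ℝ → ℝ)
    (hg₁ : ContinuousOn (Function.uncurry g₁) (Set.Icc 0 L₀ ×ˢ Set.Icc 0 T))
    (hg₂ : ContinuousOn (Function.uncurry g₂) (Set.Icc 0 L₀ ×ˢ Set.Icc 0 T))
    (hg₃ : ContinuousOn (Function.uncurry g₃) (Set.Icc L₀ L ×ˢ Set.Icc 0 T))
    (hg₄ : ContinuousOn (Function.uncurry g₄) (Set.Icc L₀ L ×ˢ Set.Icc 0 T))
    (φ ω u v : ℝ → ℝ → ℝ)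
    (hφ : ∀ n : ℕ, ContDiff ℝ n (Function.uncurry φ))
    (hω : ∀ n : ℕ, ContDiff ℝ n (Function.uncurry ω))
    (hu : ∀ n : ℕ, ContDiff ℝ n (Function.uncurry u))
    (hv : ∀ n : ℕ, ContDiff ℝ n (Function.uncurry v))
    -- the four equations of the system
    (heq1 : ∀ x ∈ Set.Ioo (0:ℝ) L₀, ∀ t ∈ Set.Ioo (0:ℝ) T,
      β₁ * pdt (pdt φ) x t - μ₁ * pdx (pdx (pdt (pdt φ))) x t
        - κ * pdx (pdx (pdt φ)) x t + lam₁ * pdx (pdx (pdx (pdx φ))) x t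
        - pdx (fun y s => pdx φ y s * (pdx ω y s + (pdx φ y s) ^ 2 / 2)) x t = g₁ x t)
    (heq2 : ∀ x ∈ Set.Ioo (0:ℝ) L₀, ∀ t ∈ Set.Ioo (0:ℝ) T,
      ρ₁ * pdt (pdt ω) x t + γ * pdt ω x t
        - pdx (fun y s => pdx ω y s + (pdx φ y s) ^ 2 / 2) x t = g₂ x t)
    (heq3 : ∀ x ∈ Set.Ioo L₀ L, ∀ t ∈ Set.Ioo (0:ℝ) T,
      β₂ * pdt (pdt u) x t - μ₂ * pdx (pdx (pdt (pdt u))) x t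
        + lam₂ * pdx (pdx (pdx (pdx u))) x t
        - pdx (fun y s => pdx u y s * (pdx v y s + (pdx u y s) ^ 2 / 2)) x t = g₃ x t)
    (heq4 : ∀ x ∈ Set.Ioo L₀ L, ∀ t ∈ Set.Ioo (0:ℝ) T,
      ρ₂ * pdt (pdt v) x t
        - pdx (fun y s => pdx v y s + (pdx u y s) ^ 2 / 2) x t = g₄ x t)
    -- boundary conditions at the ends of the beam
    (hbc : ∀ t ∈ Set.Icc (0:ℝ) T,
      φ 0 t = 0 ∧ pdx φ 0 t = 0 ∧ ω 0 t = 0 ∧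
      u L t = 0 ∧ pdx (pdx u) L t = 0 ∧ v L t = 0)
    -- transmission conditions at the interface x = L₀
    (htr : ∀ t ∈ Set.Icc (0:ℝ) T,
      φ L₀ t = u L₀ t ∧ ω L₀ t = v L₀ t ∧ pdx φ L₀ t = pdx u L₀ t ∧
      lam₁ * pdx (pdx φ) L₀ t = lam₂ * pdx (pdx u) L₀ t ∧
      pdx ω L₀ t = pdx v L₀ t ∧
      lam₁ * pdx (pdx (pdx φ)) L₀ t - μ₁ * pdx (pdt (pdt φ)) L₀ t
          - κ * pdx (pdt φ) L₀ t
        = lam₂ * pdx (pdx (pdx u)) L₀ t - μ₂ * pdx (pdt (pdt u)) L₀ t)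
    -- the energy functional
    (E : ℝ → ℝ)
    (hE : ∀ t : ℝ, E t = (1 / 2) *
      ((∫ x in (0:ℝ)..L₀,
          (β₁ * (pdt φ x t) ^ 2 + ρ₁ * (pdt ω x t) ^ 2 + μ₁ * (pdx (pdt φ) x t) ^ 2
            + lam₁ * (pdx (pdx φ) x t) ^ 2
            + (pdx ω x t + (pdx φ x t) ^ 2 / 2) ^ 2)) +
       (∫ x in L₀..L,
          (β₂ * (pdt u x t) ^ 2 + ρ₂ * (pdt v x t) ^ 2 + μ₂ * (pdx (pdt u) x t) ^ 2
            + lam₂ * (pdx (pdx u) x t) ^ 2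
            + (pdx v x t + (pdx u x t) ^ 2 / 2) ^ 2)))) :
    ∀ t ∈ Set.Icc (0:ℝ) T,
      E t + κ * (∫ τ in (0:ℝ)..t, (∫ x in (0:ℝ)..L₀, (pdx (pdt φ) x τ) ^ 2))
          + γ * (∫ τ in (0:ℝ)..t, (∫ x in (0:ℝ)..L₀, (pdt ω x τ) ^ 2))
        = E 0 + ∫ τ in (0:ℝ)..t,
            ((∫ x in (0:ℝ)..L₀, (g₁ x τ * pdt φ x τ + g₂ x τ * pdt ω x τ)) +
             (∫ x in L₀..L, (g₃ x τ * pdt u x τ + g₄ x τ * pdt v x τ))) := by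
  intro t ht
  let B₁ : VonKarmanBeam := ⟨β₁, ρ₁, μ₁, lam₁, κ, γ⟩
  let B₂ : VonKarmanBeam := ⟨β₂, ρ₂, μ₂, lam₂, 0, 0⟩
  have h₁ : B₁.IsClassicalSolution 0 L₀ T g₁ g₂ φ ω := ⟨hφ 4, hω 2, heq1, heq2⟩
  have h₂ : B₂.IsClassicalSolution L₀ L T g₃ g₄ u v :=
    ⟨hu 4, hv 2, by simpa [B₂] using! heq3, by simpa [B₂] using! heq4⟩
  have hclamped : ∀ t ∈ Ioo 0 T, IsClampedAt φ ω 0 t := fun t ht =>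
    have ⟨hφ₀, hφ_x, hω₀, _⟩ := hbc t (Ioo_subset_Icc_self ht)
    ⟨hφ₀, hφ_x, hω₀⟩
  have hhinged : ∀ t ∈ Ioo 0 T, IsHingedAt u v L t := fun t ht =>
    have ⟨_, _, _, hu₀, hu_xx, hv₀⟩ := hbc t (Ioo_subset_Icc_self ht)
    ⟨hu₀, hu_xx, hv₀⟩
  have htransmits : ∀ t ∈ Ioo 0 T, B₁.TransmitsAt B₂ φ ω u v L₀ t := fun t ht =>
    have ⟨hφu, hωv, hslope, hmoment, hstretch, hshear⟩ := htr t (Ioo_subset_Icc_self ht)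
    ⟨hφu, hωv, hslope, hmoment, hstretch, by simpa [VonKarmanBeam.shearForce, B₁, B₂] using hshear⟩
  have hE_eq (s : ℝ) : E s = B₁.energy 0 L₀ φ ω s + B₂.energy L₀ L u v s := by
    rw [hE, mul_add, ← intervalIntegral.integral_const_mul, ← intervalIntegral.integral_const_mul]
    rfl
  have hdiss₁ := B₁.integral_dissipationRate (hφ 2) (hω 1) 0 L₀ 0 t
  have hdiss₂ : ∫ τ in 0..t, B₂.dissipationRate L₀ L u v τ = 0 := by
    simp [VonKarmanBeam.dissipationRate, B₂]
  rw [hE_eq t, hE_eq 0, add_assoc, ← hdiss₁,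
    ← stmt_4_general hL₀.le hL.le h₁ h₂ hclamped hhinged htransmits ht, hdiss₂, add_zero]
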